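/- arXiv:1811.04145 — 3 statements merged into one kernel-verified Lean document; each statement's English description precedes it below -/
import Mathlib

section
/- Let X be a compact metric space, ε > 0, and A ⊆ X a chain connected subset. Then any two points of A may be joined by an ε-chain lying in A having at most 2·C(X,ε/2) points. -/
open Filter Metric Set
open scoped ENNReal NNReal Topology

variable {X : Type*} [MetricSpace X]

/-- The metric entourage of size `ε`: pairs at distance less than `ε`. -/
def MetricEnt (X : Type*) [MetricSpace X] (ε : ℝ) : Set (X × X) :=
  {p | dist p.1 p.2 < ε}

/-- An entourage in a metric space: a symmetric subset of `X × X` containing some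
metric entourage `E_ε`. -/
def IsEntourage (E : Set (X × X)) : Prop :=
  (∀ p : X × X, p ∈ E → (p.2, p.1) ∈ E) ∧ ∃ ε > 0, MetricEnt X ε ⊆ E

/-- The `E`-ball about `x`: `B(x,E) = {y | (x,y) ∈ E}`. -/
def EBall (E : Set (X × X)) (x : X) : Set X := {y | (x, y) ∈ E}

/-- An `E`-chain: a nonempty finite sequence of points with all consecutive pairs in `E`. -/
def IsEChain (E : Set (X × X)) (l : List X) : Prop :=
  l ≠ [] ∧ l.Chain' (fun a b => (a, b) ∈ E)

/-- Concatenation of two chains sharing an endpoint (the last point of `α` should be the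
first point of `β`). -/
def chainConc (α β : List X) : List X := α ++ β.tail

/-- The length `L(α)` of a chain: the sum of the distances between consecutive points. -/
noncomputable def chainLength : List X → ℝ
  | [] => 0
  | [_] => 0
  | a :: b :: rest => dist a b + chainLength (b :: rest)

/-- A basic move of an `E`-homotopy: inserting a point between two consecutive points
(legal when both new pairs lie in `E`), or removing an interior point (legal when the
resulting consecutive pair lies in `E`).  Endpoints are never changed. -/
inductive EStep (E : Set (X × X)) : List X → List X → Prop
  | insert (pre : List X) (a x b : X) (post : List X)
      (h1 : (a, x) ∈ E) (h2 : (x, b) ∈ E) :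
      EStep E (pre ++ a :: b :: post) (pre ++ a :: x :: b :: post)
  | remove (pre : List X) (a x b : X) (post : List X)
      (h : (a, b) ∈ E) :
      EStep E (pre ++ a :: x :: b :: post) (pre ++ a :: b :: post)

/-- Two chains are `E`-homotopic if one passes from one to the other by finitely many
basic moves. -/
def EHomotopic (E : Set (X × X)) : List X → List X → Prop :=
  Relation.ReflTransGen (EStep E)

/-- Two `E`-loops `l₁`, `l₂` are freely `E`-homotopic if there are `E`-chains `α`, `β`
from a common point to their respective basepoints such that the corresponding
conjugated loops are `E`-homotopic. -/
def FreelyEHomotopic (E : Set (X × X)) (l₁ l₂ : List X) : Prop :=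
  ∃ α β : List X, IsEChain E α ∧ IsEChain E β ∧ α.head? = β.head? ∧
    α.getLast? = l₁.head? ∧ β.getLast? = l₂.head? ∧
    EHomotopic E (chainConc (chainConc α l₁) α.reverse)
      (chainConc (chainConc β l₂) β.reverse)

/-- A subset `A` is chain connected if for every `δ > 0` any two points of `A` are joined
by a `δ`-chain lying in `A`. -/
def ChainConnected (A : Set X) : Prop :=
  ∀ δ > 0, ∀ x ∈ A, ∀ y ∈ A, ∃ l : List X, IsEChain (MetricEnt X δ) l ∧
    (∀ z ∈ l, z ∈ A) ∧ l.head? = some x ∧ l.getLast? = some y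

/-- A chained entourage: an entourage contained in the closure of its interior, this
closure being compact if the space is not, such that any pair `(x,y) ∈ E` may be joined
by arbitrarily fine chains inside `B(x,E) ∩ B(y,E)`. -/
def IsChained (E : Set (X × X)) : Prop :=
  IsEntourage E ∧ E ⊆ closure (interior E) ∧
  (¬ CompactSpace X → IsCompact (closure (interior E))) ∧
  ∀ p ∈ E, ∀ δ > 0, ∃ l : List X, IsEChain (MetricEnt X δ) l ∧
    l.head? = some p.1 ∧ l.getLast? = some p.2 ∧
    ∀ z ∈ l, z ∈ EBall E p.1 ∩ EBall E p.2

/-- An `F`-refinement of a `D`-chain: between each pair of consecutive points `x`, `y` of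
the original chain insert an `F`-chain from `x` to `y` lying in `B(x,D) ∩ B(y,D)`. -/
inductive IsRefinement (D F : Set (X × X)) : List X → List X → Prop
  | single (x : X) : IsRefinement D F [x] [x]
  | cons (x y : X) (seg rest refRest : List X)
      (hseg : IsEChain F (x :: (seg ++ [y])))
      (hin : ∀ z ∈ x :: (seg ++ [y]), z ∈ EBall D x ∩ EBall D y)
      (hrest : IsRefinement D F (y :: rest) refRest) :
      IsRefinement D F (x :: y :: rest) (x :: (seg ++ refRest))

/-- An `E`-subdivision of a curve `c` (regarded on `[0,1]`): an `E`-chain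
`{c(t₀),…,c(tₙ)}` with `0 = t₀ ≤ ⋯ ≤ tₙ = 1` such that the restriction of `c` to each
`[tᵢ,tᵢ₊₁]` lies in `B(c(tᵢ),E) ∩ B(c(tᵢ₊₁),E)`. -/
def IsSubdivision (E : Set (X × X)) (c : ℝ → X) (l : List X) : Prop :=
  ∃ ts : List ℝ, ts.head? = some 0 ∧ ts.getLast? = some 1 ∧
    l = ts.map c ∧ IsEChain E l ∧
    ts.Chain' (fun a b => a ≤ b ∧ ∀ s, a ≤ s → s ≤ b →
      c s ∈ EBall E (c a) ∩ EBall E (c b))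

/-- `c` is a stringing of the chain `l` iff `c` is a curve on `[0,1]` of which `l` is an
`E`-subdivision. -/
def IsStringing (E : Set (X × X)) (l : List X) (c : ℝ → X) : Prop :=
  ContinuousOn c (Set.Icc 0 1) ∧ IsSubdivision E c l

/-- Two curves with the same endpoints are `E`-homotopic if they admit `E`-homotopic
`E`-subdivisions. -/
def CurveEHomotopic (E : Set (X × X)) (c₁ c₂ : ℝ → X) : Prop :=
  ∃ l₁ l₂ : List X, IsSubdivision E c₁ l₁ ∧ IsSubdivision E c₂ l₂ ∧ EHomotopic E l₁ l₂

/-- Two closed curves are freely `E`-homotopic if they admit freely `E`-homotopic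
`E`-subdivisions. -/
def CurveFreelyEHomotopic (E : Set (X × X)) (c₁ c₂ : ℝ → X) : Prop :=
  ∃ l₁ l₂ : List X, IsSubdivision E c₁ l₁ ∧ IsSubdivision E c₂ l₂ ∧ FreelyEHomotopic E l₁ l₂

/-- A `D`-small loop: a `D`-loop of the form `γ * τ * γ̄` where `τ` is a `D`-loop with
exactly three edges. -/
def IsSmallLoop (D : Set (X × X)) (l : List X) : Prop :=
  ∃ (γ : List X) (a b c : X), IsEChain D γ ∧ γ.getLast? = some a ∧
    (a, b) ∈ D ∧ (b, c) ∈ D ∧ (c, a) ∈ D ∧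
    l = chainConc (chainConc γ [a, b, c, a]) γ.reverse

/-- `C(X,ε)`: the minimal number of open `ε`-balls needed to cover `X`. -/
noncomputable def coveringNumber (X : Type*) [MetricSpace X] (ε : ℝ) : ℕ :=
  sInf {n : ℕ | ∃ s : Finset X, s.card = n ∧ (⋃ x ∈ s, Metric.ball x ε) = Set.univ}

/-- A geodesic space: any two points are joined by a curve whose length (total
variation) equals the distance between them. -/
def IsGeodesicSpace (X : Type*) [MetricSpace X] : Prop :=
  ∀ x y : X, ∃ f : ℝ → X, ContinuousOn f (Set.Icc 0 1) ∧ f 0 = x ∧ f 1 = y ∧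
    eVariationOn f (Set.Icc 0 1) = ENNReal.ofReal (dist x y)

/-- Fixed-endpoint path homotopy of two curves on `[0,1]`. -/
def PathHomotopicOn (f g : ℝ → X) : Prop :=
  ∃ H : ℝ × ℝ → X, ContinuousOn H (Set.Icc 0 1 ×ˢ Set.Icc 0 1) ∧
    (∀ t ∈ Set.Icc (0:ℝ) 1, H (0, t) = f t ∧ H (1, t) = g t) ∧
    (∀ s ∈ Set.Icc (0:ℝ) 1, H (s, 0) = f 0 ∧ H (s, 1) = f 1)

/-- Concatenation of a list of chains (each sharing its endpoint with the next). -/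
def concList : List (List X) → List X
  | [] => []
  | [l] => l
  | l :: l' :: ls => chainConc l (concList (l' :: ls))

/-- Concatenation of two curves on `[0,1]`. -/
noncomputable def concat2 (f g : ℝ → X) : ℝ → X :=
  fun t => if t ≤ 1 / 2 then f (2 * t) else g (2 * t - 1)

/-- Concatenation of a finite list of loops based at `p`. -/
noncomputable def concatLoops (p : X) : List (ℝ → X) → ℝ → X
  | [] => fun _ => p
  | [f] => f
  | f :: g :: fs => concat2 f (concatLoops p (g :: fs))

/-- A curve on `[0,1]` is parameterized proportional to arclength. -/
def PropToArclength (c : ℝ → X) : Prop :=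
  ∀ t ∈ Set.Icc (0:ℝ) 1, eVariationOn c (Set.Icc 0 t) =
    ENNReal.ofReal t * eVariationOn c (Set.Icc 0 1)

/-- A closed curve (parameterized on `[0,1]` proportional to arclength) is a closed
`κ`-geodesic if every subarc of its periodic extension of length at most `κ` has length
equal to the distance between its endpoints. -/
def IsClosedKGeodesic (c : ℝ → X) (κ : ℝ) : Prop :=
  c 0 = c 1 ∧
  ∀ s t : ℝ, s ≤ t →
    eVariationOn (fun u => c (Int.fract u)) (Set.Icc s t) ≤ ENNReal.ofReal κ →
    eVariationOn (fun u => c (Int.fract u)) (Set.Icc s t) =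
      ENNReal.ofReal (dist (c (Int.fract s)) (c (Int.fract t)))

/-!
Take a shortest `ε`-chain from `x` to `y` in `A`. Terms of it at distance less than `ε` have
indices differing by at most one, since otherwise the terms strictly between them could be cut out.
Hence each ball of radius `ε / 2` contains at most two terms of the chain.
-/

theorem le_two_mul_card_of_eq_imp_le_succ {β : Type*} {n : ℕ} {f : Fin n → β} {t : Finset β}
    (hft : ∀ i, f i ∈ t) (hf : ∀ i k, f i = f k → (k : ℕ) ≤ i + 1) : n ≤ 2 * t.card := by
  -- Indices with the same value differ by at most one, so value and parity determine the index.
  have hinj : Function.Injective fun i : Fin n ↦ (f i, (i : ℕ) % 2) := by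
    intro i k hik
    obtain ⟨hval, hparity⟩ := Prod.mk.inj hik
    have hki := hf i k hval
    have hik' := hf k i hval.symm
    exact Fin.ext (by omega)
  have hmaps : ∀ i ∈ Finset.univ, (f i, (i : ℕ) % 2) ∈ t ×ˢ Finset.range 2 := fun i _ ↦
    Finset.mk_mem_product (hft i) (Finset.mem_range.2 (Nat.mod_lt _ two_pos))
  simpa [mul_comm] using Finset.card_le_card_of_injOn _ hmaps hinj.injOn

section Chains

variable {α : Type*}

/-- `l` is an `E`-chain from `x` to `y` lying in `A`. The endpoints are recorded in the `Option`
form used by `ChainConnected`, so that `ChainConnected A` provides such an `l` definitionally. -/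
def IsEChainJoining (E : Set (α × α)) (A : Set α) (x y : α) (l : List α) : Prop :=
  IsEChain E l ∧ (∀ z ∈ l, z ∈ A) ∧ l.head? = some x ∧ l.getLast? = some y

theorem isChain_take_append_drop {R : α → α → Prop} {l : List α} {i k : ℕ}
    (hl : l.IsChain R) (hi : i < l.length) (hk : k < l.length) (hR : R l[i] l[k]) :
    (l.take (i + 1) ++ l.drop k).IsChain R := by
  refine (hl.take _).append (hl.drop _) fun a ha b hb ↦ ?_
  obtain rfl : l[i] = a := by simpa [List.getLast?_take, hi] using ha
  obtain rfl : l[k] = b := by simpa [hk] using hb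
  exact hR

variable {E : Set (α × α)} {A : Set α} {x y : α} {l : List α}

theorem IsEChainJoining.take_append_drop {i k : ℕ} (hl : IsEChainJoining E A x y l)
    (hi : i < l.length) (hk : k < l.length) (hE : (l[i], l[k]) ∈ E) :
    IsEChainJoining E A x y (l.take (i + 1) ++ l.drop k) := by
  obtain ⟨⟨hne, hchain⟩, hA, hhead, hlast⟩ := hl
  refine ⟨⟨by simp [hne], isChain_take_append_drop hchain hi hk hE⟩, fun z hz ↦ ?_, ?_, ?_⟩
  · exact hA z ((List.mem_append.1 hz).elim List.mem_of_mem_take List.mem_of_mem_drop)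
  · simp [List.head?_append, List.head?_take, hhead]
  · simp [List.getLast?_append, List.getLast?_drop, hk, hlast]

theorem index_le_succ_of_minimalFor {i k : ℕ}
    (hl : MinimalFor (IsEChainJoining E A x y) List.length l) (hi : i < l.length)
    (hk : k < l.length) (hE : (l[i], l[k]) ∈ E) : k ≤ i + 1 := by
  have hle : l.length ≤ (l.take (i + 1) ++ l.drop k).length :=
    hl.le (hl.prop.take_append_drop hi hk hE)
  simp only [List.length_append, List.length_take, List.length_drop] at hle
  omega

theorem length_le_two_mul_card_of_minimalFor {β : Type*} {f : α → β} {t : Finset β}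
    (hl : MinimalFor (IsEChainJoining E A x y) List.length l)
    (hft : ∀ z ∈ A, f z ∈ t)
    (hfE : ∀ z ∈ A, ∀ w ∈ A, f z = f w → (z, w) ∈ E) : l.length ≤ 2 * t.card := by
  have hA : ∀ i : Fin l.length, l[i] ∈ A := fun i ↦ hl.prop.2.1 _ (l.getElem_mem i.isLt)
  exact le_two_mul_card_of_eq_imp_le_succ (f := fun i ↦ f l[i]) (fun i ↦ hft _ (hA i))
    fun i k hik ↦ index_le_succ_of_minimalFor hl i.isLt k.isLt (hfE _ (hA i) _ (hA k) hik)

end Chains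

theorem exists_finset_iUnion_ball_eq_univ {α : Type*} [PseudoMetricSpace α]
    (hα : TotallyBounded (univ : Set α)) {r : ℝ} (hr : 0 < r) :
    ∃ s : Finset α, ⋃ c ∈ s, ball c r = univ := by
  obtain ⟨t, htfin, htcover⟩ := Metric.totallyBounded_iff.1 hα r hr
  exact ⟨htfin.toFinset, by simpa [univ_subset_iff] using htcover⟩

theorem exists_finset_card_eq_coveringNumber {r : ℝ}
    (h : ∃ s : Finset X, ⋃ c ∈ s, ball c r = univ) :
    ∃ s : Finset X, s.card = coveringNumber X r ∧ ⋃ c ∈ s, ball c r = univ := by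
  have hne : {n : ℕ | ∃ s : Finset X, s.card = n ∧ ⋃ c ∈ s, ball c r = univ}.Nonempty :=
    h.imp' Finset.card fun s hs ↦ ⟨s, rfl, hs⟩
  exact Nat.sInf_mem hne

theorem chainConnected_short_chain_general {ε : ℝ}
    (hcover : ∃ s : Finset X, ⋃ c ∈ s, ball c (ε / 2) = univ) {A : Set X} {x y : X}
    (hjoin : ∃ l, IsEChainJoining (MetricEnt X ε) A x y l) :
    ∃ l, IsEChainJoining (MetricEnt X ε) A x y l ∧ l.length ≤ 2 * coveringNumber X (ε / 2) := by
  obtain ⟨l, hl⟩ := exists_minimalFor_of_wellFoundedLT _ List.length hjoin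
  obtain ⟨s, hcard, hs⟩ := exists_finset_card_eq_coveringNumber hcover
  choose center hcenter hball using iUnion₂_eq_univ_iff.1 hs
  have hclose : ∀ z w, center z = center w → (z, w) ∈ MetricEnt X ε := fun z w hzw ↦
    calc dist z w ≤ dist z (center z) + dist w (center z) := dist_triangle_right _ _ _
      _ < ε / 2 + ε / 2 := add_lt_add (hball z) (hzw ▸ hball w)
      _ = ε := add_halves ε
  refine ⟨l, hl.prop, hcard ▸ ?_⟩
  exact length_le_two_mul_card_of_minimalFor hl (fun z _ ↦ hcenter z) fun z _ w _ ↦ hclose z w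

/-- in a compact metric space, any two points of a chain connected set `A`
may be joined by an `ε`-chain in `A` with at most `2·C(X,ε/2)` points. -/
theorem chainConnected_short_chain [CompactSpace X] (ε : ℝ) (hε : 0 < ε)
    (A : Set X) (hA : ChainConnected A) (x y : X) (hx : x ∈ A) (hy : y ∈ A) :
    ∃ l : List X, IsEChain (MetricEnt X ε) l ∧ (∀ z ∈ l, z ∈ A) ∧
      l.head? = some x ∧ l.getLast? = some y ∧
      l.length ≤ 2 * coveringNumber X (ε / 2) := by
  obtain ⟨l, ⟨hchain, hlA, hhead, hlast⟩, hlen⟩ := chainConnected_short_chain_general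
    (exists_finset_iUnion_ball_eq_univ isCompact_univ.totallyBounded (half_pos hε))
    (hA ε hε x hx y hy)
  exact ⟨l, hchain, hlA, hhead, hlast, hlen⟩
end

section
/- Let X be a metric space, c : [0,1] → X a continuous curve, and E an entourage in X. Then c has an E-subdivision, and any two E-subdivisions of c are E-homotopic. Moreover, for curves c_1 and c_2 with the same endpoints, some E-subdivision of c_1 is E-homotopic to some E-subdivision of c_2 if and only if every E-subdivision of c_1 is E-homotopic to every E-subdivision of c_2. -/
open Filter Metric Set
open scoped ENNReal NNReal Topology

variable {X : Type*} [MetricSpace X]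

/-! Call a partition of `[0,1]` fine if `c` maps each of its closed pieces to a set whose points are
pairwise `E`-related. Fine partitions exist by a Lebesgue number argument. Inserting a point keeps
them fine and changes their chains by a basic move; an arbitrary `E`-subdivision `ts` has no such
stability, as `c` of a new point need not be `E`-related to the rest of its piece. So insert the
points of `ts` into a fine partition. Between consecutive points `a ≤ b` of `ts`, all points are
`E`-related to `c a`, hence can be removed from left to right, which leaves the chain of `ts`. -/

section Chains

variable {Y : Type*} {E : Set (Y × Y)} {l l' : List Y}

theorem EStep.cons (x : Y) (h : EStep E l l') : EStep E (x :: l) (x :: l') := by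
  cases h with
  | insert pre a y b post hay hyb => exact .insert (x :: pre) a y b post hay hyb
  | remove pre a y b post hab => exact .remove (x :: pre) a y b post hab

theorem EStep.isEChain (h : EStep E l l') (hl : IsEChain E l) : IsEChain E l' := by
  refine ⟨by cases h <;> simp, ?_⟩
  cases h with
  | insert pre a x b post hax hxb =>
    obtain ⟨hpre, -, hpost⟩ := List.isChain_append_cons_cons.1 hl.2
    exact List.isChain_append_cons_cons.2 ⟨hpre, hax, hpost.cons_cons hxb⟩
  | remove pre a x b post hab =>
    obtain ⟨hpre, -, hpost⟩ := List.isChain_append_cons_cons.1 hl.2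
    exact List.isChain_append_cons_cons.2 ⟨hpre, hab, hpost.tail⟩

theorem EStep.symm (h : EStep E l l') (hl : IsEChain E l) : EStep E l' l := by
  cases h with
  | insert pre a x b post _ _ =>
    exact .remove pre a x b post (List.isChain_append_cons_cons.1 hl.2).2.1
  | remove pre a x b post _ =>
    obtain ⟨-, hax, hpost⟩ := List.isChain_append_cons_cons.1 hl.2
    exact .insert pre a x b post hax (List.isChain_cons_cons.1 hpost).1

theorem EHomotopic.cons (x : Y) (h : EHomotopic E l l') : EHomotopic E (x :: l) (x :: l') :=
  Relation.ReflTransGen.lift (x :: ·) (fun _ _ => EStep.cons x) _ _ h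

theorem EHomotopic.symm (h : EHomotopic E l l') (hl : IsEChain E l) : EHomotopic E l' l := by
  induction h using Relation.ReflTransGen.head_induction_on with
  | refl => exact .refl
  | head hstep _ ih => exact (ih (hstep.isEChain hl)).tail (hstep.symm hl)

theorem EHomotopic.remove_of_forall_mem {x z : Y} (post : List Y) :
    ∀ {l : List Y}, (∀ p ∈ l ++ [z], (x, p) ∈ E) →
      EHomotopic E (x :: (l ++ z :: post)) (x :: z :: post)
  | [], _ => .refl
  | [a], h => .single (.remove [] x a z post (h z (by simp)))
  | a :: b :: l, h =>
    .head (.remove [] x a b (l ++ z :: post) (h b (by simp)))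
      (EHomotopic.remove_of_forall_mem post (l := b :: l)
        fun p hp => h p (List.mem_cons_of_mem a hp))

end Chains

theorem exists_eq_cons_append_singleton {α : Type*} {l : List α} {a b : α} (hab : a ≠ b)
    (ha : l.head? = some a) (hb : l.getLast? = some b) : ∃ m, l = a :: (m ++ [b]) := by
  obtain ⟨t, rfl⟩ := List.head?_eq_some_iff.1 ha
  obtain ⟨m, hm⟩ := List.getLast?_eq_some_iff.1 hb
  cases m with
  | nil => exact absurd (List.cons.inj hm).1 hab
  | cons _ m => exact ⟨m, by rw [hm, ← (List.cons.inj hm).1, List.cons_append]⟩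

theorem mem_Icc_of_isChain_le {ι : Type*} [Preorder ι] {a b t : ι} {l : List ι}
    (h : (a :: (l ++ [b])).IsChain (· ≤ ·)) (ht : t ∈ l ++ [b]) : t ∈ Icc a b := by
  obtain ⟨ha, hb⟩ := List.pairwise_cons.1 (List.isChain_iff_pairwise.1 h)
  refine ⟨ha t ht, ?_⟩
  rcases List.mem_append.1 ht with htl | htb
  · exact (List.pairwise_append.1 hb).2.2 t htl b (List.mem_singleton_self b)
  · exact (List.mem_singleton.1 htb).le

section Steps

variable {ι Y : Type*}

/-- The condition imposed by `IsSubdivision` on two consecutive parameters `a`, `b` of an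
`E`-subdivision of `c`, over an arbitrary ordered set of parameters. -/
def SubdivisionStep [Preorder ι] (E : Set (Y × Y)) (c : ι → Y) (a b : ι) : Prop :=
  a ≤ b ∧ ∀ s, a ≤ s → s ≤ b → c s ∈ EBall E (c a) ∩ EBall E (c b)

/-- The parameter interval `[a, b]` is `E`-fine for `c`: any two points of the image of `[a, b]`
are `E`-related. Unlike `SubdivisionStep`, this passes to subintervals. -/
def FineStep [Preorder ι] (E : Set (Y × Y)) (c : ι → Y) (a b : ι) : Prop :=
  a ≤ b ∧ ∀ s ∈ Icc a b, ∀ t ∈ Icc a b, (c s, c t) ∈ E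

section Preorder

variable [Preorder ι] {E : Set (Y × Y)} {c : ι → Y} {a b : ι}

theorem FineStep.mem (h : FineStep E c a b) : (c a, c b) ∈ E :=
  h.2 a (left_mem_Icc.2 h.1) b (right_mem_Icc.2 h.1)

theorem FineStep.mono {a' b' : ι} (h : FineStep E c a b) (ha : a ≤ a') (hab : a' ≤ b')
    (hb : b' ≤ b) : FineStep E c a' b' :=
  ⟨hab, fun s hs t ht => h.2 s (Icc_subset_Icc ha hb hs) t (Icc_subset_Icc ha hb ht)⟩

theorem FineStep.subdivisionStep (h : FineStep E c a b) : SubdivisionStep E c a b :=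
  ⟨h.1, fun s has hsb =>
    ⟨h.2 a (left_mem_Icc.2 h.1) s ⟨has, hsb⟩, h.2 b (right_mem_Icc.2 h.1) s ⟨has, hsb⟩⟩⟩

theorem isEChain_map_of_isChain_fineStep {l : List ι} (hl : l ≠ [])
    (h : l.IsChain (FineStep E c)) : IsEChain E (l.map c) :=
  ⟨mt List.map_eq_nil_iff.1 hl, (List.isChain_map c).2 (h.imp fun _ _ => FineStep.mem)⟩

theorem isChain_fineStep_insert {x y : ι} {post : List ι}
    (h : (x :: y :: post).IsChain (FineStep E c)) (hb : b ∈ Icc x y) :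
    (x :: b :: y :: post).IsChain (FineStep E c) ∧
      EHomotopic E ((x :: y :: post).map c) ((x :: b :: y :: post).map c) := by
  obtain ⟨hxy, hpost⟩ := List.isChain_cons_cons.1 h
  have hxb := hxy.mono le_rfl hb.1 hb.2
  have hby := hxy.mono hb.1 hb.2 le_rfl
  exact ⟨(hpost.cons_cons hby).cons_cons hxb, .single (.insert [] _ _ _ _ hxb.mem hby.mem)⟩

theorem SubdivisionStep.eHomotopic_remove {x b : ι} {us : List ι} (h : SubdivisionStep E c x b)
    (hus : (x :: (us ++ [b])).IsChain (· ≤ ·)) (post : List ι) :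
    EHomotopic E ((x :: (us ++ b :: post)).map c) ((x :: b :: post).map c) := by
  have hmem : ∀ p ∈ us.map c ++ [c b], (c x, p) ∈ E := by
    rw [← List.map_singleton, ← List.map_append, List.forall_mem_map]
    intro t ht
    obtain ⟨hxt, htb⟩ := mem_Icc_of_isChain_le hus ht
    exact (h.2 t hxt htb).1
  simpa only [List.map_cons, List.map_append] using
    EHomotopic.remove_of_forall_mem (post.map c) hmem

end Preorder

section LinearOrder

variable [LinearOrder ι] {E : Set (Y × Y)} {c : ι → Y}

theorem exists_isChain_fineStep_insert {x b z : ι} {rs : List ι}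
    (h : (x :: (rs ++ [z])).IsChain (FineStep E c)) (hb : b ∈ Icc x z) :
    ∃ us vs, (x :: (us ++ b :: (vs ++ [z]))).IsChain (FineStep E c) ∧
      EHomotopic E ((x :: (rs ++ [z])).map c) ((x :: (us ++ b :: (vs ++ [z]))).map c) := by
  induction rs generalizing x with
  | nil => exact ⟨[], [], isChain_fineStep_insert h hb⟩
  | cons y rs ih =>
    rcases le_total b y with hby | hyb
    · exact ⟨[], y :: rs, isChain_fineStep_insert h ⟨hb.1, hby⟩⟩
    · obtain ⟨hxy, hrs⟩ := List.isChain_cons_cons.1 h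
      obtain ⟨us, vs, hchain, hhom⟩ := ih hrs ⟨hyb, hb.2⟩
      exact ⟨y :: us, vs, hchain.cons_cons hxy, hhom.cons (c x)⟩

theorem eHomotopic_of_isChain_fineStep_of_isChain_subdivisionStep {x z : ι} {ts rs : List ι}
    (hr : (x :: (rs ++ [z])).IsChain (FineStep E c))
    (ht : (x :: (ts ++ [z])).IsChain (SubdivisionStep E c)) :
    EHomotopic E ((x :: (rs ++ [z])).map c) ((x :: (ts ++ [z])).map c) := by
  induction ts generalizing rs x with
  | nil => exact (List.isChain_pair.1 ht).eHomotopic_remove (hr.imp fun _ _ h => h.1) []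
  | cons b ts ih =>
    have hb : b ∈ Icc x z := mem_Icc_of_isChain_le (ht.imp fun _ _ h => h.1) List.mem_cons_self
    obtain ⟨hxb, hbz⟩ := List.isChain_cons_cons.1 ht
    obtain ⟨us, vs, hchain, hinsert⟩ := exists_isChain_fineStep_insert hr hb
    obtain ⟨hus, hvs⟩ := (List.isChain_split (l₁ := x :: us)).1 hchain
    have hremove := hxb.eHomotopic_remove (hus.imp fun _ _ h => h.1) (vs ++ [z])
    exact (hinsert.trans hremove).trans ((ih hvs hbz).cons (c x))

end LinearOrder

end Steps

section Subdivisions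

variable {Y : Type*} {E : Set (Y × Y)} {c : ℝ → Y}

theorem isSubdivision_of_isChain_fineStep {rs : List ℝ}
    (h : (0 :: (rs ++ [1])).IsChain (FineStep E c)) :
    IsSubdivision E c ((0 :: (rs ++ [1])).map c) :=
  ⟨0 :: (rs ++ [1]), List.head?_cons, by rw [← List.cons_append, List.getLast?_concat], rfl,
    isEChain_map_of_isChain_fineStep (List.cons_ne_nil _ _) h,
    h.imp fun _ _ => FineStep.subdivisionStep⟩

theorem IsSubdivision.eHomotopic_of_isChain_fineStep {l : List Y} (hl : IsSubdivision E c l)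
    {rs : List ℝ} (hrs : (0 :: (rs ++ [1])).IsChain (FineStep E c)) :
    EHomotopic E ((0 :: (rs ++ [1])).map c) l := by
  obtain ⟨ts, hhead, hlast, rfl, -, hts⟩ := hl
  obtain ⟨ts, rfl⟩ := exists_eq_cons_append_singleton zero_ne_one hhead hlast
  exact eHomotopic_of_isChain_fineStep_of_isChain_subdivisionStep hrs hts

end Subdivisions

section UniformSpace

open scoped Uniformity

variable {Y : Type*} [UniformSpace Y] {E : Set (Y × Y)}

theorem reflTransGen_fineStep (hE : E ∈ 𝓤 Y) {c : ℝ → Y} {a b : ℝ} (hab : a ≤ b)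
    (hc : ContinuousOn c (Icc a b)) : Relation.ReflTransGen (FineStep E c) a b := by
  obtain ⟨D, hD, hDopen, hDsymm, hDE⟩ := comp_open_symm_mem_uniformity_sets hE
  obtain ⟨t, ht₀, htmono, ⟨m, htm⟩, hball⟩ := exists_monotone_Icc_subset_open_cover_Icc hab
    (c := fun y => (Icc a b).domRestrict c ⁻¹' UniformSpace.ball y D)
    (fun y => (UniformSpace.isOpen_ball y hDopen).preimage hc.domRestrict)
    fun s _ => mem_iUnion.2 ⟨c s, UniformSpace.mem_ball_self (c s) hD⟩
  have hstep (n : ℕ) : FineStep E c (t n) (t (n + 1)) := by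
    obtain ⟨y, hy⟩ := hball n
    have hyD : ∀ s ∈ Icc (t n : ℝ) (t (n + 1)), (y, c s) ∈ D := fun s hs =>
      hy (a := ⟨s, (t n).2.1.trans hs.1, hs.2.trans (t (n + 1)).2.2⟩) hs
    exact ⟨htmono n.le_succ, fun s hs s' hs' =>
      hDE ⟨y, hDsymm.symm _ _ (hyD s hs), hyD s' hs'⟩⟩
  have hreach (n : ℕ) : Relation.ReflTransGen (FineStep E c) a (t n) := by
    induction n with
    | zero => rw [ht₀]
    | succ n ih => exact ih.tail (hstep n)
  exact htm m le_rfl ▸ hreach m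

theorem exists_isChain_fineStep (hE : E ∈ 𝓤 Y) {c : ℝ → Y} {a b : ℝ} (hab : a < b)
    (hc : ContinuousOn c (Icc a b)) : ∃ rs, (a :: (rs ++ [b])).IsChain (FineStep E c) := by
  obtain ⟨l, hl, hlast⟩ :=
    List.exists_isChain_cons_of_relationReflTransGen (reflTransGen_fineStep hE hab.le hc)
  obtain ⟨rs, hrs⟩ := exists_eq_cons_append_singleton hab.ne List.head?_cons
    (List.getLast?_eq_some_getLast (List.cons_ne_nil a l) |>.trans (congrArg some hlast))
  exact ⟨rs, hrs ▸ hl⟩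

variable {c : ℝ → Y}

theorem exists_isSubdivision (hE : E ∈ 𝓤 Y) (hc : ContinuousOn c (Icc 0 1)) :
    ∃ l, IsSubdivision E c l :=
  let ⟨_, hrs⟩ := exists_isChain_fineStep hE one_pos hc
  ⟨_, isSubdivision_of_isChain_fineStep hrs⟩

theorem IsSubdivision.eHomotopic (hE : E ∈ 𝓤 Y) (hc : ContinuousOn c (Icc 0 1))
    {l₁ l₂ : List Y} (h₁ : IsSubdivision E c l₁) (h₂ : IsSubdivision E c l₂) :
    EHomotopic E l₁ l₂ := by
  obtain ⟨rs, hrs⟩ := exists_isChain_fineStep hE one_pos hc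
  have hchain := isEChain_map_of_isChain_fineStep (List.cons_ne_nil _ _) hrs
  exact ((h₁.eHomotopic_of_isChain_fineStep hrs).symm hchain).trans
    (h₂.eHomotopic_of_isChain_fineStep hrs)

theorem curveEHomotopic_iff_forall (hE : E ∈ 𝓤 Y) {c₁ c₂ : ℝ → Y}
    (hc₁ : ContinuousOn c₁ (Icc 0 1)) (hc₂ : ContinuousOn c₂ (Icc 0 1)) :
    CurveEHomotopic E c₁ c₂ ↔
      ∀ l₁ l₂, IsSubdivision E c₁ l₁ → IsSubdivision E c₂ l₂ → EHomotopic E l₁ l₂ := by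
  constructor
  · rintro ⟨m₁, m₂, hm₁, hm₂, hm⟩ l₁ l₂ hl₁ hl₂
    exact ((hl₁.eHomotopic hE hc₁ hm₁).trans hm).trans (hm₂.eHomotopic hE hc₂ hl₂)
  · intro h
    obtain ⟨l₁, hl₁⟩ := exists_isSubdivision hE hc₁
    obtain ⟨l₂, hl₂⟩ := exists_isSubdivision hE hc₂
    exact ⟨l₁, l₂, hl₁, hl₂, h l₁ l₂ hl₁ hl₂⟩

theorem subdivision_exists_and_homotopic_general (hE : E ∈ 𝓤 Y)
    (hc : ContinuousOn c (Icc 0 1)) :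
    (∃ l : List Y, IsSubdivision E c l) ∧
    (∀ l₁ l₂ : List Y, IsSubdivision E c l₁ → IsSubdivision E c l₂ → EHomotopic E l₁ l₂) ∧
    (∀ c₁ c₂ : ℝ → Y, ContinuousOn c₁ (Icc 0 1) → ContinuousOn c₂ (Icc 0 1) →
      (CurveEHomotopic E c₁ c₂ ↔
        ∀ l₁ l₂ : List Y, IsSubdivision E c₁ l₁ → IsSubdivision E c₂ l₂ →
          EHomotopic E l₁ l₂)) :=
  ⟨exists_isSubdivision hE hc, fun _ _ => IsSubdivision.eHomotopic hE hc,
    fun _ _ => curveEHomotopic_iff_forall hE⟩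

theorem IsEntourage.mem_uniformity {E : Set (X × X)} (hE : IsEntourage E) : E ∈ 𝓤 X :=
  let ⟨_, _, hε, hεE⟩ := hE
  mem_of_superset (dist_mem_uniformity hε) hεE

end UniformSpace

/-- every curve has an `E`-subdivision, any two `E`-subdivisions of a curve
are `E`-homotopic, and for two curves with the same endpoints, some pair of
`E`-subdivisions is `E`-homotopic iff every pair is. -/
theorem subdivision_exists_and_homotopic (E : Set (X × X)) (hE : IsEntourage E)
    (c : ℝ → X) (hc : ContinuousOn c (Set.Icc 0 1)) :
    (∃ l : List X, IsSubdivision E c l) ∧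
    (∀ l₁ l₂ : List X, IsSubdivision E c l₁ → IsSubdivision E c l₂ →
      EHomotopic E l₁ l₂) ∧
    (∀ c₁ c₂ : ℝ → X, ContinuousOn c₁ (Set.Icc 0 1) → ContinuousOn c₂ (Set.Icc 0 1) →
      c₁ 0 = c₂ 0 → c₁ 1 = c₂ 1 →
      ((∃ l₁ l₂ : List X, IsSubdivision E c₁ l₁ ∧ IsSubdivision E c₂ l₂ ∧
          EHomotopic E l₁ l₂) ↔
        (∀ l₁ l₂ : List X, IsSubdivision E c₁ l₁ → IsSubdivision E c₂ l₂ →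
          EHomotopic E l₁ l₂))) :=
  let ⟨hexists, hhom, hiff⟩ := subdivision_exists_and_homotopic_general hE.mem_uniformity hc
  ⟨hexists, hhom, fun c₁ c₂ hc₁ hc₂ _ _ => hiff c₁ c₂ hc₁ hc₂⟩
end

section
/- Let X be a metric space, D a chained entourage in X, and E ⊆ D an entourage. Suppose α and β are E-chains with the same endpoints and there is a D-homotopy from α to β (regarding them as D-chains). Then β is E-homotopic to a concatenation λ_1*…*λ_r*α*λ_{r+1}*…*λ_n, where each λ_i is an E-refinement of a D-small loop. -/
open Filter Metric Set
open scoped ENNReal NNReal Topology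

variable {X : Type*} [MetricSpace X]

/-!
Fix an `E`-refinement of every edge in `D`, leaving the edges in `E` alone, and refine every
`D`-chain accordingly; `α` and `β` are then their own refinements. A basic `D`-move replaces an
initial segment `u` of a chain `u * w` by a segment `v` with the same endpoints, across a triangle
in `D`, so that `v * ū` is a `D`-small loop. Writing `u'`, `v'`, `w'` for the refinements,
`v' * w'` is `E`-homotopic to `(v' * ū') * (u' * w')`, and `v' * ū'` refines `v * ū`.
Hence each move contributes one factor on the left.
-/

section Factorization

variable {Y : Type*} {D E : SetRel Y Y}

theorem chainConc_eq_dropLast_append {u v : List Y} (h : u.getLast? = v.head?) :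
    chainConc u v = u.dropLast ++ v := by
  rcases v with _ | ⟨b, v⟩
  · simp [chainConc, List.getLast?_eq_none_iff.1 h]
  · obtain ⟨u, rfl⟩ := List.getLast?_eq_some_iff.1 h
    simp [chainConc]

theorem chainConc_assoc {u v w : List Y} (hv : v ≠ []) :
    chainConc (chainConc u v) w = chainConc u (chainConc v w) := by
  simp [chainConc, List.tail_append_of_ne_nil hv]

theorem head?_chainConc {u : List Y} (hu : u ≠ []) (v : List Y) :
    (chainConc u v).head? = u.head? := by
  rw [chainConc, List.head?_append_of_ne_nil _ hu]

theorem getLast?_chainConc {u v : List Y} (h : u.getLast? = v.head?) (hv : v ≠ []) :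
    (chainConc u v).getLast? = v.getLast? := by
  rw [chainConc_eq_dropLast_append h, List.getLast?_append_of_ne_nil _ hv]

theorem concList_cons {ls : List (List Y)} (h : ls ≠ []) (l : List Y) :
    concList (l :: ls) = chainConc l (concList ls) := by
  obtain ⟨l', ls, rfl⟩ := List.exists_cons_of_ne_nil h
  rfl

namespace IsEChain

theorem mono (hED : E ⊆ D) {l : List Y} (h : IsEChain E l) : IsEChain D l :=
  ⟨h.1, List.IsChain.imp (fun _ _ hab => hED hab) h.2⟩

theorem reverse [E.IsSymm] {l : List Y} (h : IsEChain E l) : IsEChain E l.reverse :=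
  ⟨by simpa using h.1,
    List.isChain_reverse.2 (List.IsChain.imp (fun _ _ hab => E.symm hab) h.2)⟩

theorem chainConc {u v : List Y} (hu : IsEChain E u) (hv : IsEChain E v)
    (h : u.getLast? = v.head?) : IsEChain E (chainConc u v) := by
  obtain ⟨b, v, rfl⟩ := List.exists_cons_of_ne_nil hv.1
  obtain ⟨u, rfl⟩ := List.getLast?_eq_some_iff.1 h
  rw [chainConc_eq_dropLast_append h, List.dropLast_concat]
  exact ⟨by simp, List.isChain_split.2 ⟨hu.2, hv.2⟩⟩

theorem pair {x y : Y} (h : (x, y) ∈ E) : IsEChain E [x, y] :=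
  ⟨by simp, List.isChain_pair.2 h⟩

end IsEChain

theorem EStep.append_append {l l' : List Y} (h : EStep E l l') (p q : List Y) :
    EStep E (p ++ l ++ q) (p ++ l' ++ q) := by
  cases h with
  | insert pre a x b post hax hxb =>
    simpa using EStep.insert (p ++ pre) a x b (post ++ q) hax hxb
  | remove pre a x b post hab =>
    simpa using EStep.remove (p ++ pre) a x b (post ++ q) hab

theorem EStep.head?_eq {l l' : List Y} (h : EStep E l l') : l.head? = l'.head? := by
  cases h with
  | insert pre => cases pre <;> rfl
  | remove pre => cases pre <;> rfl

namespace EHomotopic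

theorem append_append {l l' : List Y} (h : EHomotopic E l l') (p q : List Y) :
    EHomotopic E (p ++ l ++ q) (p ++ l' ++ q) :=
  Relation.ReflTransGen.lift (p ++ · ++ q) (fun _ _ hstep => hstep.append_append p q) _ _ h

theorem head?_eq {l l' : List Y} (h : EHomotopic E l l') : l.head? = l'.head? := by
  induction h with
  | refl => rfl
  | tail _ hstep ih => exact ih.trans hstep.head?_eq

theorem chainConc_left {l l' p : List Y} (h : EHomotopic E l l') (hp : p.getLast? = l.head?) :
    EHomotopic E (chainConc p l) (chainConc p l') := by
  rw [chainConc_eq_dropLast_append hp, chainConc_eq_dropLast_append (hp.trans h.head?_eq)]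
  simpa using h.append_append p.dropLast []

/- Basic moves leave one-point chains alone, so the detour out of `b` and back is inserted at the
end of an edge `{y, b}`. -/
theorem edge_conc_reverse [E.IsRefl] [E.IsSymm] {y b : Y} {w : List Y} (hyb : (y, b) ∈ E)
    (hw : (b :: w).IsChain fun x z => (x, z) ∈ E) :
    EHomotopic E [y, b] (y :: chainConc (b :: w) (b :: w).reverse) := by
  induction w generalizing y b with
  | nil => exact .refl
  | cons x w ih =>
    obtain ⟨hbx, hw⟩ := List.isChain_cons_cons.1 hw
    have double : EStep E [y, b] [y, b, b] := .insert [] y b b [] hyb E.rfl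
    have detour : EStep E [y, b, b] [y, b, x, b] := .insert [y] b x b [] hbx (E.symm hbx)
    have inner := (ih hbx hw).append_append [y] [b]
    rw [chainConc, List.reverse_cons (a := b), List.tail_append_of_ne_nil (by simp)]
    refine .head double (.head detour ?_)
    simpa [EHomotopic, chainConc] using inner

theorem chainConc_reverse_cancel [E.IsRefl] [E.IsSymm] {u v : List Y} (hu : IsEChain E u)
    (hv : IsEChain E v) (hlast : u.getLast? = v.getLast?) (hlen : 2 ≤ v.length) (q : List Y) :
    EHomotopic E (chainConc v q) (chainConc (chainConc v u.reverse) (chainConc u q)) := by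
  obtain ⟨v, y, b, rfl⟩ : ∃ v' y b, v = v' ++ [y, b] := by
    rcases v.eq_nil_or_concat with rfl | ⟨v, b, rfl⟩
    · simp at hlen
    rcases v.eq_nil_or_concat with rfl | ⟨v, y, rfl⟩
    · simp at hlen
    exact ⟨v, y, b, by simp⟩
  have hyb : (y, b) ∈ E := List.isChain_pair.1 (List.IsChain.right_of_append hv.2)
  obtain ⟨w, hw⟩ : ∃ w, u.reverse = b :: w :=
    List.head?_eq_some_iff.1 (by rw [List.head?_reverse, hlast]; simp)
  obtain rfl := List.reverse_eq_iff.1 hw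
  have detour := (edge_conc_reverse hyb (hw ▸ hu.reverse.2)).append_append v q.tail
  rw [hw, chainConc_assoc (by simp), ← chainConc_assoc (u := b :: w) (by simp)]
  simpa [chainConc] using detour

end EHomotopic

namespace IsRefinement

theorem pair {x y : Y} {s : List Y} (hs : IsEChain E (x :: (s ++ [y])))
    (hmem : ∀ z ∈ x :: (s ++ [y]), z ∈ EBall D x ∩ EBall D y) :
    IsRefinement D E [x, y] (x :: (s ++ [y])) :=
  .cons x y s [] [y] hs hmem (.single y)

theorem pair_self [D.IsRefl] [D.IsSymm] (hED : E ⊆ D) {x y : Y} (h : (x, y) ∈ E) :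
    IsRefinement D E [x, y] [x, y] :=
  pair (s := []) (.pair h) (by simp [EBall, hED h, D.symm (hED h), D.rfl])

theorem exists_eq_of_pair {x y : Y} {l : List Y} (h : IsRefinement D E [x, y] l) :
    ∃ s, l = x :: (s ++ [y]) := by
  rcases h with _ | ⟨_, _, s, _, _, _, _, ⟨⟩⟩
  exact ⟨s, rfl⟩

variable {l m : List Y}

theorem head?_eq (h : IsRefinement D E l m) : m.head? = l.head? := by
  cases h <;> rfl

theorem isEChain (h : IsRefinement D E l m) : IsEChain E m := by
  induction h with
  | single x => exact ⟨by simp, .singleton x⟩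
  | cons x y s rest m hs _ hrest ih =>
    obtain ⟨m, rfl⟩ := List.head?_eq_some_iff.1 hrest.head?_eq
    simpa [_root_.chainConc] using hs.chainConc ih (by simp [List.getLast?_cons])

theorem getLast?_eq (h : IsRefinement D E l m) : m.getLast? = l.getLast? := by
  induction h with
  | single x => rfl
  | cons x y s rest m _ _ hrest ih =>
    rw [← List.cons_append, List.getLast?_append_of_ne_nil _ hrest.isEChain.1, ih,
      List.getLast?_cons_cons]

theorem length_le (h : IsRefinement D E l m) : l.length ≤ m.length := by
  induction h with
  | single x => rfl
  | cons x y s rest m _ _ _ ih => simp only [List.length_cons, List.length_append] at ih ⊢; omega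

theorem chainConc {l' m' : List Y} (h : IsRefinement D E l m) (h' : IsRefinement D E l' m')
    (hl : l.getLast? = l'.head?) : IsRefinement D E (chainConc l l') (chainConc m m') := by
  induction h with
  | single x =>
    rw [chainConc_eq_dropLast_append hl,
      chainConc_eq_dropLast_append (hl.trans h'.head?_eq.symm)]
    exact h'
  | cons x y s rest m hs hmem _ ih =>
    rw [List.getLast?_cons_cons] at hl
    simpa [_root_.chainConc] using IsRefinement.cons x y s _ _ hs hmem (ih hl)

theorem reverse [E.IsSymm] (h : IsRefinement D E l m) :
    IsRefinement D E l.reverse m.reverse := by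
  induction h with
  | single x => exact .single x
  | cons x y s rest m hs hmem _ ih =>
    have hlast : IsRefinement D E [y, x] (y :: (s.reverse ++ [x])) :=
      .pair (by simpa using hs.reverse)
        (fun z hz => (hmem z (by simpa [or_comm, or_assoc, or_left_comm] using hz)).symm)
    simpa [_root_.chainConc] using ih.chainConc hlast (by simp)

end IsRefinement

/-- A choice, for every edge `{x, y}` in `D`, of an `E`-refinement with interior points `s x y`.
Edges already in `E` receive no interior points, so that `E`-chains are their own refinements. -/
structure IsEdgeRefinement (D E : SetRel Y Y) (s : Y → Y → List Y) : Prop where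
  isRefinement {x y : Y} (h : (x, y) ∈ D) : IsRefinement D E [x, y] (x :: (s x y ++ [y]))
  eq_nil {x y : Y} (h : (x, y) ∈ E) : s x y = []

theorem exists_isEdgeRefinement [D.IsRefl] [D.IsSymm] (hED : E ⊆ D)
    (hDE : ∀ x y, (x, y) ∈ D → ∃ l, IsRefinement D E [x, y] l) :
    ∃ s, IsEdgeRefinement D E s := by
  have edge (x y : Y) : ∃ s, ((x, y) ∈ D → IsRefinement D E [x, y] (x :: (s ++ [y]))) ∧
      ((x, y) ∈ E → s = []) := by
    by_cases hE : (x, y) ∈ E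
    · exact ⟨[], fun _ => .pair_self hED hE, fun _ => rfl⟩
    by_cases hD : (x, y) ∈ D
    · obtain ⟨l, hl⟩ := hDE x y hD
      obtain ⟨s, rfl⟩ := hl.exists_eq_of_pair
      exact ⟨s, fun _ => hl, fun h => absurd h hE⟩
    · exact ⟨[], fun h => absurd h hD, fun _ => rfl⟩
  choose s hs using edge
  exact ⟨s, fun {x y} => (hs x y).1, fun {x y} => (hs x y).2⟩

/-- The refinement of a chain that inserts the points `s x y` into each edge `{x, y}`. -/
def refineChain (s : Y → Y → List Y) : List Y → List Y
  | [] => []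
  | [x] => [x]
  | x :: y :: l => x :: (s x y ++ refineChain s (y :: l))

theorem head?_refineChain (s : Y → Y → List Y) (l : List Y) :
    (refineChain s l).head? = l.head? := by
  rcases l with _ | ⟨x, _ | ⟨y, l⟩⟩ <;> rfl

theorem refineChain_chainConc (s : Y → Y → List Y) {u v : List Y} (h : u.getLast? = v.head?) :
    refineChain s (chainConc u v) = chainConc (refineChain s u) (refineChain s v) := by
  induction u with
  | nil => simp_all [chainConc, refineChain, eq_comm]
  | cons x u ih =>
    rcases u with _ | ⟨y, u⟩
    · have h' := h.trans (head?_refineChain s v).symm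
      rw [refineChain, chainConc_eq_dropLast_append h, chainConc_eq_dropLast_append h']
      rfl
    · rw [List.getLast?_cons_cons] at h
      simpa [chainConc, refineChain] using ih h

namespace IsEdgeRefinement

variable {s : Y → Y → List Y}

theorem isRefinement_refineChain (hs : IsEdgeRefinement D E s) {l : List Y}
    (hl : IsEChain D l) : IsRefinement D E l (refineChain s l) := by
  obtain ⟨hne, hl⟩ := hl
  induction l with
  | nil => exact absurd rfl hne
  | cons x l ih =>
    rcases l with _ | ⟨y, l⟩
    · exact .single x
    obtain ⟨hxy, hl⟩ := List.isChain_cons_cons.1 hl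
    have hedge := hs.isRefinement hxy
    obtain ⟨m, hm⟩ := List.head?_eq_some_iff.1 (head?_refineChain s (y :: l))
    simpa [refineChain, chainConc, hm] using hedge.chainConc (ih (by simp) hl) rfl

theorem refineChain_eq_self (hs : IsEdgeRefinement D E s) {l : List Y} (hl : IsEChain E l) :
    refineChain s l = l := by
  obtain ⟨-, hl⟩ := hl
  induction l with
  | nil => rfl
  | cons x l ih =>
    rcases l with _ | ⟨y, l⟩
    · rfl
    obtain ⟨hxy, hl⟩ := List.isChain_cons_cons.1 hl
    simp only [refineChain, hs.eq_nil hxy, ih hl, List.nil_append]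

end IsEdgeRefinement

/-- Two `D`-chains with common endpoints such that `v * ū` is a `D`-small loop, as when `u` becomes
`v` under a basic move. That `v` has an edge makes room for inserting a detour along `ū * u`. -/
structure DifferBySmallLoop (D : SetRel Y Y) (u v : List Y) : Prop where
  isEChain_left : IsEChain D u
  isEChain_right : IsEChain D v
  head?_eq : u.head? = v.head?
  getLast?_eq : u.getLast? = v.getLast?
  two_le_length : 2 ≤ v.length
  isSmallLoop : IsSmallLoop D (chainConc v u.reverse)

theorem differBySmallLoop_insert [D.IsSymm] {p : List Y} {a x b : Y}
    (hp : IsEChain D (p ++ [a])) (hab : (a, b) ∈ D) (hax : (a, x) ∈ D) (hxb : (x, b) ∈ D) :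
    DifferBySmallLoop D (p ++ [a, b]) (p ++ [a, x, b]) where
  isEChain_left := by simpa [chainConc] using hp.chainConc (.pair hab) (by simp)
  isEChain_right := by
    have haxb : IsEChain D [a, x, b] := (IsEChain.pair hax).chainConc (.pair hxb) rfl
    simpa [chainConc] using hp.chainConc haxb (by simp)
  head?_eq := by cases p <;> rfl
  getLast?_eq := by simp
  two_le_length := by simp
  isSmallLoop := ⟨p ++ [a], a, x, b, hp, by simp, hax, hxb, D.symm hab, by simp [chainConc]⟩

theorem differBySmallLoop_remove [D.IsSymm] {p : List Y} {a x b : Y}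
    (hp : IsEChain D (p ++ [a])) (hab : (a, b) ∈ D) (hax : (a, x) ∈ D) (hxb : (x, b) ∈ D) :
    DifferBySmallLoop D (p ++ [a, x, b]) (p ++ [a, b]) :=
  have h := differBySmallLoop_insert hp hab hax hxb
  { isEChain_left := h.isEChain_right
    isEChain_right := h.isEChain_left
    head?_eq := h.head?_eq.symm
    getLast?_eq := h.getLast?_eq.symm
    two_le_length := by simp
    isSmallLoop :=
      ⟨p ++ [a], a, b, x, hp, by simp, hab, D.symm hxb, D.symm hax, by simp [chainConc]⟩ }

theorem EStep.exists_differBySmallLoop [D.IsSymm] {γ γ' : List Y} (h : EStep D γ γ')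
    (hγ : IsEChain D γ) :
    ∃ u v w, DifferBySmallLoop D u v ∧ IsEChain D w ∧ u.getLast? = w.head? ∧
      γ = chainConc u w ∧ γ' = chainConc v w := by
  cases h with
  | insert p a x b q hax hxb =>
    obtain ⟨hp, hq⟩ := List.isChain_split.1 hγ.2
    obtain ⟨hab, hq⟩ := List.isChain_cons_cons.1 hq
    exact ⟨p ++ [a, b], p ++ [a, x, b], b :: q,
      differBySmallLoop_insert ⟨by simp, hp⟩ hab hax hxb, ⟨by simp, hq⟩,
      by simp, by simp [chainConc], by simp [chainConc]⟩
  | remove p a x b q hab =>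
    obtain ⟨hp, hq⟩ := List.isChain_split.1 hγ.2
    obtain ⟨hax, hq⟩ := List.isChain_cons_cons.1 hq
    obtain ⟨hxb, hq⟩ := List.isChain_cons_cons.1 hq
    exact ⟨p ++ [a, x, b], p ++ [a, b], b :: q,
      differBySmallLoop_remove ⟨by simp, hp⟩ hab hax hxb, ⟨by simp, hq⟩,
      by simp, by simp [chainConc], by simp [chainConc]⟩

theorem EStep.exists_smallLoop_factor [D.IsSymm] [E.IsRefl] [E.IsSymm] {s : Y → Y → List Y}
    (hs : IsEdgeRefinement D E s) {γ γ' : List Y} (hstep : EStep D γ γ') (hγ : IsEChain D γ) :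
    IsEChain D γ' ∧ ∃ l, (∃ c, IsSmallLoop D c ∧ IsRefinement D E c l) ∧
      l.head? = γ.head? ∧ l.getLast? = γ.head? ∧
      EHomotopic E (refineChain s γ') (chainConc l (refineChain s γ)) := by
  obtain ⟨u, v, w, huv, hw, huw, rfl, rfl⟩ := hstep.exists_differBySmallLoop hγ
  have hvw : v.getLast? = w.head? := huv.getLast?_eq.symm.trans huw
  have hvu : v.getLast? = u.reverse.head? := by rw [List.head?_reverse, huv.getLast?_eq]
  have hu := hs.isRefinement_refineChain huv.isEChain_left
  have hv := hs.isRefinement_refineChain huv.isEChain_right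
  have hloop : IsRefinement D E (chainConc v u.reverse)
      (chainConc (refineChain s v) (refineChain s u).reverse) := hv.chainConc hu.reverse hvu
  refine ⟨huv.isEChain_right.chainConc hw hvw, _, ⟨_, huv.isSmallLoop, hloop⟩, ?_, ?_, ?_⟩
  · rw [hloop.head?_eq, head?_chainConc huv.isEChain_right.1,
      head?_chainConc huv.isEChain_left.1, huv.head?_eq]
  · rw [hloop.getLast?_eq, getLast?_chainConc hvu huv.isEChain_left.reverse.1,
      List.getLast?_reverse, head?_chainConc huv.isEChain_left.1]
  · rw [refineChain_chainConc s huw, refineChain_chainConc s hvw]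
    exact .chainConc_reverse_cancel hu.isEChain hv.isEChain
      (by rw [hu.getLast?_eq, hv.getLast?_eq, huv.getLast?_eq])
      (huv.two_le_length.trans hv.length_le) _

theorem IsEdgeRefinement.exists_smallLoop_factors [D.IsSymm] [E.IsRefl] [E.IsSymm]
    {s : Y → Y → List Y} (hs : IsEdgeRefinement D E s) (hED : E ⊆ D) {α γ : List Y}
    (hα : IsEChain E α) (hhom : EHomotopic D α γ) :
    IsEChain D γ ∧ ∃ ls : List (List Y),
      (∀ l ∈ ls, (∃ c, IsSmallLoop D c ∧ IsRefinement D E c l) ∧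
        l.head? = α.head? ∧ l.getLast? = α.head?) ∧
      EHomotopic E (refineChain s γ) (concList (ls ++ [α])) := by
  induction hhom with
  | refl =>
    refine ⟨hα.mono hED, [], by simp, ?_⟩
    rw [hs.refineChain_eq_self hα]
    exact .refl
  | @tail γ γ' hαγ hstep ih =>
    obtain ⟨hγ, ls, hls, hfactor⟩ := ih
    obtain ⟨hγ', l, hloop, hhead, hlast, hstepFactor⟩ := hstep.exists_smallLoop_factor hs hγ
    have hαγ : α.head? = γ.head? := EHomotopic.head?_eq hαγ
    refine ⟨hγ', l :: ls, List.forall_mem_cons.2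
      ⟨⟨hloop, hhead.trans hαγ.symm, hlast.trans hαγ.symm⟩, hls⟩, ?_⟩
    rw [List.cons_append, concList_cons (by simp)]
    exact hstepFactor.trans (hfactor.chainConc_left (by rw [hlast, head?_refineChain]))

theorem d_homotopy_factorization_general [D.IsSymm] [E.IsRefl] [E.IsSymm] (hED : E ⊆ D)
    (hDE : ∀ x y, (x, y) ∈ D → ∃ l, IsRefinement D E [x, y] l) {α β : List Y}
    (hα : IsEChain E α) (hβ : IsEChain E β) (hhom : EHomotopic D α β) :
    ∃ ls : List (List Y),
      (∀ l ∈ ls, IsEChain E l ∧ ∃ c, IsSmallLoop D c ∧ IsRefinement D E c l) ∧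
      (∀ l ∈ ls, l.head? = α.head? ∧ l.getLast? = α.head?) ∧
      EHomotopic E β (concList (ls ++ [α])) := by
  have : D.IsRefl := SetRel.isRefl_mono hED
  obtain ⟨s, hs⟩ := exists_isEdgeRefinement hED hDE
  obtain ⟨-, ls, hls, hfactor⟩ := hs.exists_smallLoop_factors hED hα hhom
  refine ⟨ls, fun l hl => ?_, fun l hl => (hls l hl).2, hs.refineChain_eq_self hβ ▸ hfactor⟩
  obtain ⟨c, hc, hcl⟩ := (hls l hl).1
  exact ⟨hcl.isEChain, c, hc, hcl⟩

end Factorization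

theorem IsEntourage.isSymm {D : Set (X × X)} (hD : IsEntourage D) : SetRel.IsSymm D :=
  ⟨fun x y => hD.1 (x, y)⟩

theorem IsEntourage.isRefl {D : Set (X × X)} (hD : IsEntourage D) : SetRel.IsRefl D := by
  obtain ⟨-, ε, hε, hεD⟩ := hD
  exact ⟨fun x => hεD (by simpa [MetricEnt] using hε)⟩

theorem IsChained.exists_isRefinement {D E : Set (X × X)} (hD : IsChained D)
    (hE : IsEntourage E) (x y : X) (hxy : (x, y) ∈ D) :
    ∃ l, IsRefinement D E [x, y] l := by
  obtain ⟨-, -, -, hchain⟩ := hD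
  obtain ⟨ε, hε, hεE⟩ := hE.2
  obtain ⟨l, hl, hhead, hlast, hmem⟩ := hchain (x, y) hxy ε hε
  obtain ⟨l, rfl⟩ := List.head?_eq_some_iff.1 hhead
  rcases l.eq_nil_or_concat with rfl | ⟨s, b, rfl⟩
  · obtain rfl : x = y := by simpa using hlast
    have := hE.isRefl
    exact ⟨[x, x], .pair (s := []) (.pair (SetRel.refl E x)) (by simpa using hmem)⟩
  · obtain rfl : b = y := by simpa [List.getLast?_cons] using hlast
    rw [List.concat_eq_append] at hl hmem
    exact ⟨_, .pair (hl.mono hεE) hmem⟩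

/-- if `D` is chained, `E ⊆ D`, and the `E`-chains `α`, `β` (same
endpoints) are `D`-homotopic, then `β` is `E`-homotopic to a concatenation
`λ₁*…*λᵣ*α*λᵣ₊₁*…*λₙ` where each `λᵢ` is an `E`-refinement of a `D`-small loop. -/
theorem d_homotopy_factorization (D E : Set (X × X)) (hD : IsChained D)
    (hE : IsEntourage E) (hED : E ⊆ D) (α β : List X)
    (hα : IsEChain E α) (hβ : IsEChain E β)
    (hhead : α.head? = β.head?) (hlast : α.getLast? = β.getLast?)
    (hhom : EHomotopic D α β) :
    ∃ ls₁ ls₂ : List (List X),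
      (∀ l ∈ ls₁ ++ ls₂, IsEChain E l ∧
        ∃ s : List X, IsSmallLoop D s ∧ IsRefinement D E s l) ∧
      (∀ l ∈ ls₁, l.head? = α.head? ∧ l.getLast? = α.head?) ∧
      (∀ l ∈ ls₂, l.head? = α.getLast? ∧ l.getLast? = α.getLast?) ∧
      EHomotopic E β (concList (ls₁ ++ α :: ls₂)) := by
  have := hD.1.isSymm
  have := hE.isRefl
  have := hE.isSymm
  obtain ⟨ls, hloops, hbase, hfactor⟩ :=
    d_homotopy_factorization_general hED (hD.exists_isRefinement hE) hα hβ hhom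
  exact ⟨ls, [], by simpa using hloops, hbase, by simp, hfactor⟩
end
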